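/- arXiv:2506.09594 — 6 statements merged into one kernel-verified Lean document; each statement's English description precedes it below -/
import Mathlib

section
/- Let x and ξ be independent real-valued random variables on a probability space, and let 0 < β ≤ θ. Assume |x| ≤ β almost surely and that ξ is uniformly distributed on the interval [−θ, θ] (i.e. the law of ξ is (2θ)⁻¹ times Lebesgue measure restricted to [−θ, θ]). Then E[x] = E[θ · sign(x + ξ)]. -/
open MeasureTheory

/-!
Since `|·|` is an antiderivative of the sign function, averaging `θ * sign (a + t)` over a dither
`t` uniform on `[-θ, θ]` gives `(|a + θ| - |a - θ|) / 2`, which is `a` clipped to `[-θ, θ]`.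
Independence allows the dither to be averaged out first with `x` held fixed, so dithered one-bit
quantization has the mean of the clipped signal, and clipping does nothing when `|x| ≤ θ`.
-/

section Sign

theorem monotone_real_sign : Monotone Real.sign := by
  intro a b hab
  rcases lt_trichotomy a 0 with ha | rfl | ha
  · rw [Real.sign_of_neg ha]
    rcases Real.sign_apply_eq b with hb | hb | hb <;> norm_num [hb]
  · rcases hab.eq_or_lt with rfl | hb
    · rfl
    · norm_num [Real.sign_of_pos hb]
  · rw [Real.sign_of_pos ha, Real.sign_of_pos (ha.trans_le hab)]

theorem abs_real_sign_le_one (a : ℝ) : |Real.sign a| ≤ 1 := by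
  rcases Real.sign_apply_eq a with h | h | h <;> norm_num [h]

theorem integrable_mul_real_sign_add (ν : Measure (ℝ × ℝ)) [IsFiniteMeasure ν] (c : ℝ) :
    Integrable (fun p ↦ c * Real.sign (p.1 + p.2)) ν := by
  have hmeas : Measurable fun p : ℝ × ℝ ↦ Real.sign (p.1 + p.2) :=
    monotone_real_sign.measurable.comp measurable_add
  exact (Integrable.of_bound hmeas.aestronglyMeasurable 1
    (.of_forall fun p ↦ abs_real_sign_le_one (p.1 + p.2))).const_mul c

theorem hasDerivAt_abs_real_sign {a : ℝ} (ha : a ≠ 0) : HasDerivAt (|·|) (Real.sign a) a := by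
  rcases ha.lt_or_gt with ha | ha
  · rw [Real.sign_of_neg ha]
    exact hasDerivAt_abs_neg ha
  · rw [Real.sign_of_pos ha]
    exact hasDerivAt_abs_pos ha

theorem integral_real_sign (a b : ℝ) : ∫ t in a..b, Real.sign t = |b| - |a| :=
  integral_eq_of_hasDerivAt_off_countable (|·|) Real.sign (Set.countable_singleton 0)
    continuous_abs.continuousOn (fun _ ht ↦ hasDerivAt_abs_real_sign ht.2)
    monotone_real_sign.intervalIntegrable

end Sign

section UniformDither

theorem abs_add_sub_abs_sub_eq_two_mul_clip {θ : ℝ} (hθ : 0 ≤ θ) (a : ℝ) :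
    |a + θ| - |a - θ| = 2 * max (-θ) (min θ a) := by
  grind

theorem setIntegral_Icc_real_sign_const_add {θ : ℝ} (hθ : 0 ≤ θ) (a : ℝ) :
    ∫ t in Set.Icc (-θ) θ, Real.sign (a + t) = 2 * max (-θ) (min θ a) :=
  calc
    ∫ t in Set.Icc (-θ) θ, Real.sign (a + t) = ∫ t in (-θ)..θ, Real.sign (a + t) := by
      rw [integral_Icc_eq_integral_Ioc, intervalIntegral.integral_of_le (by linarith)]
    _ = |a + θ| - |a - θ| := by
      rw [intervalIntegral.integral_comp_add_left, integral_real_sign, ← sub_eq_add_neg]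
    _ = 2 * max (-θ) (min θ a) := abs_add_sub_abs_sub_eq_two_mul_clip hθ a

theorem integral_uniform_mul_real_sign_const_add {θ : ℝ} (hθ : 0 < θ) (a : ℝ) :
    ∫ t, θ * Real.sign (a + t)
        ∂((ENNReal.ofReal (2 * θ))⁻¹ • (volume : Measure ℝ).restrict (Set.Icc (-θ) θ)) =
      max (-θ) (min θ a) := by
  rw [integral_smul_measure, integral_const_mul, setIntegral_Icc_real_sign_const_add hθ.le,
    ENNReal.toReal_inv, ENNReal.toReal_ofReal (by positivity), smul_eq_mul]
  field_simp

end UniformDither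

section Independence

variable {Ω : Type*} {mΩ : MeasurableSpace Ω} {μ : Measure Ω} [IsFiniteMeasure μ]

theorem integral_comp_prodMk_of_indepFun {α β E : Type*} [MeasurableSpace α] [MeasurableSpace β]
    [NormedAddCommGroup E] [NormedSpace ℝ E] {X : Ω → α} {Y : Ω → β} {f : α × β → E}
    (hX : AEMeasurable X μ) (hY : AEMeasurable Y μ) (hXY : ProbabilityTheory.IndepFun X Y μ)
    (hf : Integrable f ((μ.map X).prod (μ.map Y))) :
    ∫ ω, f (X ω, Y ω) ∂μ = ∫ ω, ∫ y, f (X ω, y) ∂(μ.map Y) ∂μ := by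
  have hjoint : μ.map (fun ω ↦ (X ω, Y ω)) = (μ.map X).prod (μ.map Y) :=
    hXY.map_prod_eq_prod_map_map hX hY
  calc
    ∫ ω, f (X ω, Y ω) ∂μ = ∫ p, f p ∂((μ.map X).prod (μ.map Y)) := by
      rw [← hjoint, integral_map (hX.prodMk hY) (hjoint ▸ hf.aestronglyMeasurable)]
    _ = ∫ a, ∫ y, f (a, y) ∂(μ.map Y) ∂(μ.map X) := integral_prod f hf
    _ = ∫ ω, ∫ y, f (X ω, y) ∂(μ.map Y) ∂μ :=
      integral_map hX hf.aestronglyMeasurable.integral_prod_right'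

theorem dithered_one_bit_unbiased_general {x ξ : Ω → ℝ} (hx : AEMeasurable x μ)
    (hξ : AEMeasurable ξ μ) (hindep : ProbabilityTheory.IndepFun x ξ μ) {θ : ℝ} (hθ : 0 < θ)
    (hlaw : μ.map ξ =
      (ENNReal.ofReal (2 * θ))⁻¹ • (volume : Measure ℝ).restrict (Set.Icc (-θ) θ)) :
    ∫ ω, max (-θ) (min θ (x ω)) ∂μ = ∫ ω, θ * Real.sign (x ω + ξ ω) ∂μ :=
  calc
    ∫ ω, max (-θ) (min θ (x ω)) ∂μ = ∫ ω, ∫ t, θ * Real.sign (x ω + t) ∂(μ.map ξ) ∂μ := by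
      simp only [hlaw, integral_uniform_mul_real_sign_const_add hθ]
    _ = ∫ ω, θ * Real.sign (x ω + ξ ω) ∂μ :=
      (integral_comp_prodMk_of_indepFun hx hξ hindep (integrable_mul_real_sign_add _ θ)).symm

end Independence

/-- Proposition 1: for independent random variables `x` and `ξ` with `|x| ≤ β` almost surely
and `ξ` uniformly distributed on `[-θ, θ]` with `0 < β ≤ θ`, one has
`E[x] = E[θ · sign(x + ξ)]`. -/
theorem dithered_one_bit_unbiased
    {Ω : Type*} [MeasureSpace Ω] [IsProbabilityMeasure (volume : Measure Ω)]
    (x ξ : Ω → ℝ) (hx : Measurable x) (hξ : Measurable ξ)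
    (hindep : ProbabilityTheory.IndepFun x ξ (volume : Measure Ω))
    (β θ : ℝ) (hβ : 0 < β) (hβθ : β ≤ θ)
    (hbound : ∀ᵐ ω, |x ω| ≤ β)
    (hlaw : Measure.map ξ (volume : Measure Ω) =
      (ENNReal.ofReal (2 * θ))⁻¹ • (volume : Measure ℝ).restrict (Set.Icc (-θ) θ)) :
    ∫ ω, x ω = ∫ ω, θ * Real.sign (x ω + ξ ω) := by
  have hclip : ∀ᵐ ω, x ω = max (-θ) (min θ (x ω)) := hbound.mono fun ω hω ↦ by
    obtain ⟨hlower, hupper⟩ := abs_le.mp (hω.trans hβθ)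
    rw [min_eq_right hupper, max_eq_right hlower]
  exact (integral_congr_ae hclip).trans <| dithered_one_bit_unbiased_general
    hx.aemeasurable hξ.aemeasurable hindep (hβ.trans_le hβθ) hlaw
end

section
/- Let E be a real inner product space, let a ∈ E with a ≠ 0, let λ > 0, and let ψ : ℝ → ℝ be nondecreasing on [0, ∞). Suppose t* ≥ 0 satisfies λψ(t*) + (1/2)(t* − ‖a‖)² ≤ λψ(t) + (1/2)(t − ‖a‖)² for all t ≥ 0. Then x* = (t*/‖a‖)·a is a global minimizer over E of f(x) = λψ(‖x‖) + (1/2)‖x − a‖², i.e. f(x*) ≤ f(x) for all x ∈ E. -/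
/-! By the reverse triangle inequality, `|‖x‖ - ‖a‖| ≤ ‖x - a‖`, with equality when `x` lies on the
ray spanned by `a`. Moving `x` to the point of that ray with the same norm therefore leaves the
penalty unchanged and does not increase the distance to `a`, and on the ray the objective is the
scalar one. -/

section SeminormedSpace

variable {E : Type*} [SeminormedAddCommGroup E]

theorem sq_norm_sub_norm_le (x y : E) : (‖x‖ - ‖y‖) ^ 2 ≤ ‖x - y‖ ^ 2 :=
  sq_le_sq.mpr ((abs_norm_sub_norm_le x y).trans (le_abs_self _))

variable [NormedSpace ℝ E] {a : E}

theorem norm_div_norm_smul (ha : ‖a‖ ≠ 0) (t : ℝ) : ‖(t / ‖a‖) • a‖ = |t| := by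
  rw [norm_smul, norm_div, norm_norm, div_mul_cancel₀ _ ha, Real.norm_eq_abs]

theorem norm_div_norm_smul_sub_self (ha : ‖a‖ ≠ 0) (t : ℝ) :
    ‖(t / ‖a‖) • a - a‖ = |t - ‖a‖| := by
  have hsmul : (t / ‖a‖) • a - a = ((t - ‖a‖) / ‖a‖) • a := by
    rw [sub_div, div_self ha, sub_smul, one_smul]
  rw [hsmul, norm_div_norm_smul ha]

theorem groupwise_prox_global_min_general (ha : ‖a‖ ≠ 0) (φ : ℝ → ℝ) {t : ℝ} (ht : 0 ≤ t)
    (hmin : ∀ s : ℝ, 0 ≤ s →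
      φ t + (1 / 2) * (t - ‖a‖) ^ 2 ≤ φ s + (1 / 2) * (s - ‖a‖) ^ 2) (x : E) :
    φ ‖(t / ‖a‖) • a‖ + (1 / 2) * ‖(t / ‖a‖) • a - a‖ ^ 2 ≤
      φ ‖x‖ + (1 / 2) * ‖x - a‖ ^ 2 :=
  calc
    φ ‖(t / ‖a‖) • a‖ + (1 / 2) * ‖(t / ‖a‖) • a - a‖ ^ 2
        = φ t + (1 / 2) * (t - ‖a‖) ^ 2 := by
      rw [norm_div_norm_smul ha, abs_of_nonneg ht, norm_div_norm_smul_sub_self ha, sq_abs]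
    _ ≤ φ ‖x‖ + (1 / 2) * (‖x‖ - ‖a‖) ^ 2 := hmin ‖x‖ (norm_nonneg x)
    _ ≤ φ ‖x‖ + (1 / 2) * ‖x - a‖ ^ 2 := by
      gcongr φ ‖x‖ + (1 / 2) * ?_
      exact sq_norm_sub_norm_le x a

end SeminormedSpace

/-- Groupwise (tube-wise / slice-wise) generalized nonconvex thresholding: in a real
inner product space, if `t* ≥ 0` minimizes `t ↦ λψ(t) + (1/2)(t − ‖a‖)²` over `t ≥ 0`,
then `x* = (t*/‖a‖)·a` is a global minimizer of `x ↦ λψ(‖x‖) + (1/2)‖x − a‖²`. -/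
theorem groupwise_prox_global_min
    {E : Type*} [NormedAddCommGroup E] [InnerProductSpace ℝ E]
    (a : E) (ha : a ≠ 0) (lam : ℝ) (hlam : 0 < lam)
    (ψ : ℝ → ℝ) (hψ : MonotoneOn ψ (Set.Ici 0))
    (tstar : ℝ) (ht0 : 0 ≤ tstar)
    (hmin : ∀ t : ℝ, 0 ≤ t →
      lam * ψ tstar + (1 / 2) * (tstar - ‖a‖) ^ 2 ≤
        lam * ψ t + (1 / 2) * (t - ‖a‖) ^ 2) :
    ∀ x : E,
      lam * ψ ‖(tstar / ‖a‖) • a‖ + (1 / 2) * ‖(tstar / ‖a‖) • a - a‖ ^ 2 ≤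
        lam * ψ ‖x‖ + (1 / 2) * ‖x - a‖ ^ 2 :=
  groupwise_prox_global_min_general (norm_ne_zero_iff.mpr ha) (fun t ↦ lam * ψ t) ht0 hmin
end

section
/- Let λ > 0 and γ > 1, and define the MCP penalty φ : ℝ → ℝ by φ(x) = λ|x| − x²/(2γ) for |x| ≤ γλ and φ(x) = γλ²/2 for |x| > γλ. For v ∈ ℝ define x* = 0 if |v| ≤ λ; x* = sign(v)·γ(|v| − λ)/(γ − 1) if λ < |v| ≤ γλ; and x* = v if |v| > γλ. Then x* is a global minimizer over ℝ of f(x) = φ(x) + (1/2)(x − v)². -/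
/-!
The penalty `φ` is weakly convex: adding `x ^ 2 / (2 * γ)` makes it convex, so each of its
subgradients `g` at `p` supports it from below up to the error `(x - p) ^ 2 / (2 * γ)`. If
`g = v - p`, expanding `(x - v) ^ 2` around `p` cancels the linear term and leaves
`(1 - 1 / γ) / 2 * (x - p) ^ 2 ≥ 0`. So it suffices that `v - x*` is such a subgradient at `x*`.
-/

section ProximalSubgradient

variable {E : Type*} [NormedAddCommGroup E] [InnerProductSpace ℝ E]

/-- `g` is a proximal subgradient of `φ` at `p` with modulus `μ`, in the global form: the inequality
is required at every point and not only near `p`. For `μ = 0` this is the subgradient of convex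
analysis. -/
def IsProximalSubgradient (μ : ℝ) (φ : E → ℝ) (g p : E) : Prop :=
  ∀ x, φ p + inner ℝ g (x - p) - μ / 2 * ‖x - p‖ ^ 2 ≤ φ x

theorem IsProximalSubgradient.quadratic_growth {μ : ℝ} {φ : E → ℝ} {v p : E}
    (h : IsProximalSubgradient μ φ (v - p) p) (x : E) :
    φ p + 1 / 2 * ‖p - v‖ ^ 2 + (1 - μ) / 2 * ‖x - p‖ ^ 2 ≤ φ x + 1 / 2 * ‖x - v‖ ^ 2 := by
  have expand : ‖x - v‖ ^ 2 = ‖x - p‖ ^ 2 - 2 * inner ℝ (v - p) (x - p) + ‖p - v‖ ^ 2 := by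
    rw [← sub_sub_sub_cancel_right x v p, norm_sub_sq_real, real_inner_comm, norm_sub_rev v p]
  linarith [h x]

theorem isProximalSubgradient_real_iff {μ : ℝ} {φ : ℝ → ℝ} {g p : ℝ} :
    IsProximalSubgradient μ φ g p ↔ ∀ x, φ p + g * (x - p) - μ / 2 * (x - p) ^ 2 ≤ φ x := by
  simp only [IsProximalSubgradient, RCLike.inner_apply, conj_trivial, Real.norm_eq_abs, sq_abs,
    mul_comm g]

end ProximalSubgradient

theorem real_sign_mul_abs (v : ℝ) : Real.sign v * |v| = v := by
  rcases lt_trichotomy v 0 with hv | rfl | hv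
  · rw [Real.sign_of_neg hv, abs_of_neg hv, neg_one_mul, neg_neg]
  · rw [abs_zero, mul_zero]
  · rw [Real.sign_of_pos hv, abs_of_pos hv, one_mul]

theorem abs_real_sign_of_ne_zero {v : ℝ} (hv : v ≠ 0) : |Real.sign v| = 1 := by
  rcases Real.sign_apply_eq_of_ne_zero v hv with h | h <;> simp [h]

section MCP

variable {lam γ : ℝ}

/-- The minimax concave penalty with threshold `lam` and concavity parameter `γ`. -/
noncomputable def mcp (lam γ x : ℝ) : ℝ :=
  if |x| ≤ γ * lam then lam * |x| - x ^ 2 / (2 * γ) else γ * lam ^ 2 / 2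

/-- The closed form of the proximity operator of `mcp lam γ`, also known as firm thresholding. For
`γ = 1` the middle case is empty and this is hard thresholding. -/
noncomputable def mcpProx (lam γ v : ℝ) : ℝ :=
  if |v| ≤ lam then 0
  else if |v| ≤ γ * lam then Real.sign v * (γ * (|v| - lam) / (γ - 1))
  else v

theorem mul_abs_sub_sq_div_eq (hγ : γ ≠ 0) (x : ℝ) :
    lam * |x| - x ^ 2 / (2 * γ) = γ * lam ^ 2 / 2 - (γ * lam - |x|) ^ 2 / (2 * γ) := by
  rw [← sq_abs x]
  field_simp
  ring

theorem mul_abs_sub_sq_div_le_mcp (hγ : 0 < γ) (x : ℝ) :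
    lam * |x| - x ^ 2 / (2 * γ) ≤ mcp lam γ x := by
  unfold mcp
  split_ifs
  · exact le_rfl
  · rw [mul_abs_sub_sq_div_eq hγ.ne']
    exact sub_le_self _ (by positivity)

theorem mcp_isProximalSubgradient_of_abs_le (hγ : 0 < γ) {a p : ℝ} (hp : |p| ≤ γ * lam)
    (ha : |a| ≤ lam) (hap : a * p = lam * |p|) :
    IsProximalSubgradient γ⁻¹ (mcp lam γ) (a - p / γ) p := by
  refine isProximalSubgradient_real_iff.2 fun x ↦ ?_
  calc mcp lam γ p + (a - p / γ) * (x - p) - γ⁻¹ / 2 * (x - p) ^ 2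
      = a * x - x ^ 2 / (2 * γ) := by
        rw [mcp, if_pos hp, ← hap]
        field_simp
        ring
    _ ≤ lam * |x| - x ^ 2 / (2 * γ) := by
        refine sub_le_sub_right ?_ _
        calc a * x ≤ |a * x| := le_abs_self _
          _ = |a| * |x| := abs_mul a x
          _ ≤ lam * |x| := by gcongr
    _ ≤ mcp lam γ x := mul_abs_sub_sq_div_le_mcp hγ x

theorem mcp_isProximalSubgradient_zero_of_lt_abs (hγ : 0 < γ) {p : ℝ} (hp : γ * lam < |p|) :
    IsProximalSubgradient γ⁻¹ (mcp lam γ) 0 p := by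
  refine isProximalSubgradient_real_iff.2 fun x ↦ ?_
  have parabola_le : γ * lam ^ 2 / 2 - (x - p) ^ 2 / (2 * γ) ≤ mcp lam γ x := by
    unfold mcp
    split_ifs with hx
    · have hdist : γ * lam - |x| ≤ |x - p| :=
        calc γ * lam - |x| ≤ |p| - |x| := by gcongr
          _ ≤ |p - x| := abs_sub_abs_le_abs_sub p x
          _ = |x - p| := abs_sub_comm p x
      rw [mul_abs_sub_sq_div_eq hγ.ne', ← sq_abs (x - p)]
      gcongr
    · exact sub_le_self _ (by positivity)
  calc mcp lam γ p + 0 * (x - p) - γ⁻¹ / 2 * (x - p) ^ 2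
      = γ * lam ^ 2 / 2 - (x - p) ^ 2 / (2 * γ) := by
        rw [mcp, if_neg hp.not_ge]
        field_simp
        ring
    _ ≤ mcp lam γ x := parabola_le

theorem mcp_isProximalSubgradient_of_abs_mem_Ioc (hγ : 1 < γ) {v : ℝ}
    (hv : |v| ∈ Set.Ioc lam (γ * lam)) :
    IsProximalSubgradient γ⁻¹ (mcp lam γ) (v - Real.sign v * (γ * (|v| - lam) / (γ - 1)))
      (Real.sign v * (γ * (|v| - lam) / (γ - 1))) := by
  have hγ₀ : 0 < γ := zero_lt_one.trans hγ
  have hγ₁ : 0 < γ - 1 := sub_pos.2 hγ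
  have hlam : 0 ≤ lam := nonneg_of_mul_nonneg_right ((abs_nonneg v).trans hv.2) hγ₀
  have abs_sign : |Real.sign v| = 1 :=
    abs_real_sign_of_ne_zero (abs_pos.1 (hlam.trans_lt hv.1))
  have sign_sq : Real.sign v ^ 2 = 1 := by rw [← sq_abs, abs_sign, one_pow]
  obtain ⟨r, hr⟩ : ∃ r, r = γ * (|v| - lam) / (γ - 1) := ⟨_, rfl⟩
  have r_nonneg : 0 ≤ r := hr ▸ div_nonneg (mul_nonneg hγ₀.le (sub_nonneg.2 hv.1.le)) hγ₁.le
  have r_le : r ≤ γ * lam := by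
    rw [hr, div_le_iff₀ hγ₁, mul_assoc]
    gcongr
    linarith [hv.2]
  have stationary : v - Real.sign v * r = lam * Real.sign v - Real.sign v * r / γ := by
    have radial : |v| - r = lam - r / γ := by
      rw [hr]
      field_simp
      ring
    linear_combination Real.sign v * radial - real_sign_mul_abs v
  have abs_point : |Real.sign v * r| = r := by
    rw [abs_mul, abs_sign, one_mul, abs_of_nonneg r_nonneg]
  rw [← hr, stationary]
  refine mcp_isProximalSubgradient_of_abs_le hγ₀ (abs_point.trans_le r_le) ?_ ?_
  · rw [abs_mul, abs_sign, mul_one, abs_of_nonneg hlam]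
  · rw [abs_point]
    linear_combination lam * r * sign_sq

theorem sub_mcpProx_isProximalSubgradient (hγ : 1 ≤ γ) (v : ℝ) :
    IsProximalSubgradient γ⁻¹ (mcp lam γ) (v - mcpProx lam γ v) (mcpProx lam γ v) := by
  have hγ₀ : 0 < γ := zero_lt_one.trans_le hγ
  unfold mcpProx
  split_ifs with hzero hrescale
  · have hlam : 0 ≤ lam := (abs_nonneg v).trans hzero
    have h0 : |(0 : ℝ)| ≤ γ * lam := abs_zero.trans_le (mul_nonneg hγ₀.le hlam)
    simpa using mcp_isProximalSubgradient_of_abs_le hγ₀ h0 hzero (by simp)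
  · have hγ₁ : γ ≠ 1 := by
      rintro rfl
      exact hzero (one_mul lam ▸ hrescale)
    exact mcp_isProximalSubgradient_of_abs_mem_Ioc (hγ.lt_of_ne' hγ₁) ⟨not_le.1 hzero, hrescale⟩
  · simpa using mcp_isProximalSubgradient_zero_of_lt_abs hγ₀ (not_le.1 hrescale)

end MCP

theorem mcp_prox_global_min_general {lam γ : ℝ} (hγ : 1 ≤ γ) (v x : ℝ) :
    mcp lam γ (mcpProx lam γ v) + 1 / 2 * (mcpProx lam γ v - v) ^ 2
        + (1 - γ⁻¹) / 2 * (x - mcpProx lam γ v) ^ 2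
      ≤ mcp lam γ x + 1 / 2 * (x - v) ^ 2 := by
  simpa only [Real.norm_eq_abs, sq_abs] using
    (sub_mcpProx_isProximalSubgradient hγ v).quadratic_growth x

/-- Closed-form proximity operator of the MCP (minimax concave penalty): the point
`x*` (zero, linearly rescaled, or identity, according to the magnitude of `v`) is a
global minimizer of `x ↦ φ(x) + (1/2)(x − v)²`. -/
theorem mcp_prox_global_min (lam γ : ℝ) (hlam : 0 < lam) (hγ : 1 < γ)
    (φ : ℝ → ℝ)
    (hφ : ∀ x : ℝ, φ x =
      if |x| ≤ γ * lam then lam * |x| - x ^ 2 / (2 * γ) else γ * lam ^ 2 / 2)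
    (v : ℝ) (xstar : ℝ)
    (hx : xstar =
      if |v| ≤ lam then 0
      else if |v| ≤ γ * lam then Real.sign v * (γ * (|v| - lam) / (γ - 1))
      else v) :
    ∀ x : ℝ, φ xstar + (1 / 2) * (xstar - v) ^ 2 ≤ φ x + (1 / 2) * (x - v) ^ 2 := by
  intro x
  obtain rfl : φ = mcp lam γ := funext hφ
  obtain rfl : xstar = mcpProx lam γ v := hx
  have growth_nonneg : 0 ≤ (1 - γ⁻¹) / 2 * (x - mcpProx lam γ v) ^ 2 :=
    mul_nonneg (half_pos (sub_pos.2 (inv_lt_one_of_one_lt₀ hγ))).le (sq_nonneg _)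
  exact (le_add_of_nonneg_right growth_nonneg).trans (mcp_prox_global_min_general hγ.le v x)
end

section
/- Let 0 < q < 1 and λ > 0, and set β = (2λ(1 − q))^{1/(2−q)} and τ_q = β + λqβ^{q−1}. For v ≥ 0 let f(x) = λ|x|^q + (1/2)(x − v)². Then: (i) if 0 ≤ v < τ_q, the set of global minimizers of f over ℝ is {0}; (ii) if v = τ_q, the set of global minimizers of f is {0, β}; (iii) if v > τ_q, there is a unique real number b with b ≥ β and b + λq·b^{q−1} = v, one has β < b < v, and the set of global minimizers of f is {b}. -/
/-!
For `x > 0` write `f x = f 0 + x * m x` with the secant slope `m x = lam * x ^ (q - 1) + x / 2 - v`.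
Since `q - 1 < 0`, `m` is strictly convex on `(0, ∞)`, so it lies above its tangent at any `b > 0`.
If moreover `b` is a stationary point of `f`, that is `v = b + lam * q * b ^ (q - 1)`, multiplying
the tangent inequality by `x` gives `f x > f b + m' b * (x - b) ^ 2` for `0 < x ≠ b`, while at
`x = 0` the same relation is an equality: `f 0 = f b + m' b * b ^ 2`. The derivative `m'` is
strictly increasing and vanishes exactly at `β`. Hence a stationary point `b > β` is the strict
global minimizer; for `b = β`, where `v = τ_q`, it ties with `0`; and lowering `v` below `τ_q`
penalizes `x > 0` by the additional amount `(τ_q - v) * x`.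
-/

open Set

theorem setOf_forall_le_eq_of_forall_lt {α γ : Type*} [Preorder γ] {f : α → γ} {s : Set α} {a : α}
    (heq : ∀ x ∈ s, f x = f a) (hlt : ∀ x ∉ s, f a < f x) :
    {x | ∀ y, f x ≤ f y} = s := by
  ext x
  refine ⟨fun hmin => ?_, fun hx y => ?_⟩
  · by_contra hx
    exact (hlt x hx).not_ge (hmin a)
  · rw [heq x hx]
    by_cases hy : y ∈ s
    · exact (heq y hy).ge
    · exact (hlt y hy).le

theorem setOf_forall_le_eq_singleton {α γ : Type*} [Preorder γ] {f : α → γ} {a : α}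
    (hlt : ∀ x ≠ a, f a < f x) : {x | ∀ y, f x ≤ f y} = {a} :=
  setOf_forall_le_eq_of_forall_lt (by simp) hlt

theorem one_add_mul_sub_one_lt_rpow_of_neg {p t : ℝ} (hp : p < 0) (ht : 0 < t) (ht1 : t ≠ 1) :
    1 + p * (t - 1) < t ^ p := by
  calc 1 + p * (t - 1) < 1 + p * Real.log t := by
        gcongr 1 + ?_
        exact mul_lt_mul_of_neg_left (Real.log_lt_sub_one_of_pos ht ht1) hp
    _ ≤ Real.exp (Real.log t * p) := by linarith [Real.add_one_le_exp (Real.log t * p)]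
    _ = t ^ p := (Real.rpow_def_of_pos ht p).symm

theorem rpow_add_mul_sub_lt_rpow_of_neg {p b x : ℝ} (hp : p < 0) (hb : 0 < b) (hx : 0 < x)
    (hxb : x ≠ b) : b ^ p + p * b ^ (p - 1) * (x - b) < x ^ p := by
  have bernoulli : 1 + p * (x / b - 1) < (x / b) ^ p :=
    one_add_mul_sub_one_lt_rpow_of_neg hp (div_pos hx hb) (div_ne_one_of_ne hxb)
  calc b ^ p + p * b ^ (p - 1) * (x - b) = b ^ p * (1 + p * (x / b - 1)) := by
        rw [Real.rpow_sub_one hb.ne']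
        field_simp
    _ < b ^ p * (x / b) ^ p := mul_lt_mul_of_pos_left bernoulli (Real.rpow_pos_of_pos hb p)
    _ = x ^ p := by rw [← Real.mul_rpow hb.le (div_pos hx hb).le, mul_div_cancel₀ x hb.ne']

theorem rpow_sub_one_eq_rpow_sub_two_mul {b : ℝ} (q : ℝ) (hb : b ≠ 0) :
    b ^ (q - 1) = b ^ (q - 2) * b := by
  rw [← Real.rpow_add_one hb]
  ring_nf

noncomputable section

/-- The objective `f` whose global minimizers form the proximity operator of `lam * |·| ^ q`
at `v`. -/
def lqObjective (lam q v x : ℝ) : ℝ := lam * |x| ^ q + (1 / 2) * (x - v) ^ 2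

/-- The value of `v` for which `b > 0` is a stationary point of `lqObjective lam q v`. -/
def lqCenter (lam q b : ℝ) : ℝ := b + lam * q * b ^ (q - 1)

/-- The paper's `β`: the size of the jump of the proximity operator at its threshold. -/
def lqBreakpoint (lam q : ℝ) : ℝ := (2 * lam * (1 - q)) ^ ((1 : ℝ) / (2 - q))

/-- The paper's `τ_q`: the value of `v` at which the proximity operator leaves `0`. -/
def lqThreshold (lam q : ℝ) : ℝ := lqCenter lam q (lqBreakpoint lam q)

/-- The derivative at `b > 0` of the secant slope
`x ↦ (lqObjective lam q v x - lqObjective lam q v 0) / x`; it does not depend on `v`. -/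
def lqSlopeDeriv (lam q b : ℝ) : ℝ := 1 / 2 - lam * (1 - q) * b ^ (q - 2)

end

section

variable {lam q v b x : ℝ}

theorem lqBreakpoint_pos (hq : q < 1) (hlam : 0 < lam) : 0 < lqBreakpoint lam q :=
  Real.rpow_pos_of_pos (mul_pos (by positivity) (sub_pos.2 hq)) _

theorem lqSlopeDeriv_lqBreakpoint (hq : q < 1) (hlam : 0 < lam) :
    lqSlopeDeriv lam q (lqBreakpoint lam q) = 0 := by
  have hbase : 0 < 2 * lam * (1 - q) := mul_pos (by positivity) (sub_pos.2 hq)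
  have hpow : lqBreakpoint lam q ^ (q - 2) = (2 * lam * (1 - q))⁻¹ := by
    have hexp : (1 : ℝ) / (2 - q) * (q - 2) = -1 := by
      have : 2 - q ≠ 0 := by linarith
      field_simp
      ring
    rw [lqBreakpoint, ← Real.rpow_mul hbase.le, hexp, Real.rpow_neg_one]
  rw [lqSlopeDeriv, hpow]
  have : 1 - q ≠ 0 := by linarith
  field_simp
  ring

theorem strictMonoOn_lqSlopeDeriv (hq : q < 1) (hlam : 0 < lam) :
    StrictMonoOn (lqSlopeDeriv lam q) (Ioi 0) := fun _ ha _ _ hab =>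
  sub_lt_sub_left (mul_lt_mul_of_pos_left (Real.rpow_lt_rpow_of_neg ha hab (by linarith))
    (mul_pos hlam (sub_pos.2 hq))) _

theorem lqSlopeDeriv_pos (hq : q < 1) (hlam : 0 < lam) (hb : lqBreakpoint lam q < b) :
    0 < lqSlopeDeriv lam q b := by
  have hβ := lqBreakpoint_pos hq hlam
  rw [← lqSlopeDeriv_lqBreakpoint hq hlam]
  exact strictMonoOn_lqSlopeDeriv hq hlam hβ (hβ.trans hb) hb

theorem lqSlopeDeriv_nonneg (hq : q < 1) (hlam : 0 < lam) (hb : lqBreakpoint lam q ≤ b) :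
    0 ≤ lqSlopeDeriv lam q b := by
  rcases hb.eq_or_lt with rfl | hb
  · exact (lqSlopeDeriv_lqBreakpoint hq hlam).ge
  · exact (lqSlopeDeriv_pos hq hlam hb).le

theorem self_lt_lqCenter (hq : 0 < q) (hlam : 0 < lam) (hb : 0 < b) : b < lqCenter lam q b :=
  lt_add_of_pos_right b (mul_pos (mul_pos hlam hq) (Real.rpow_pos_of_pos hb _))

theorem lqObjective_eq_mul_rpow_sub_one (hx : 0 < x) :
    lqObjective lam q v x = lam * (x ^ (q - 1) * x) + (1 / 2) * (x - v) ^ 2 := by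
  rw [lqObjective, abs_of_pos hx, ← Real.rpow_add_one hx.ne', sub_add_cancel]

theorem lqObjective_zero (hq : q ≠ 0) : lqObjective lam q v 0 = (1 / 2) * v ^ 2 := by
  rw [lqObjective, abs_zero, Real.zero_rpow hq]
  ring

theorem lqObjective_lqCenter_zero (hq : q ≠ 0) (hb : 0 < b) :
    lqObjective lam q (lqCenter lam q b) 0 =
      lqObjective lam q (lqCenter lam q b) b + lqSlopeDeriv lam q b * b ^ 2 := by
  have hpow := rpow_sub_one_eq_rpow_sub_two_mul q hb.ne'
  rw [lqObjective_zero hq, lqObjective_eq_mul_rpow_sub_one hb, lqCenter, lqSlopeDeriv, hpow]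
  ring

theorem lqObjective_lqCenter_add_sq_lt (hq : q < 1) (hlam : 0 < lam) (hb : 0 < b) (hx : 0 < x)
    (hxb : x ≠ b) :
    lqObjective lam q (lqCenter lam q b) b + lqSlopeDeriv lam q b * (x - b) ^ 2 <
      lqObjective lam q (lqCenter lam q b) x := by
  have hpow := rpow_sub_one_eq_rpow_sub_two_mul q hb.ne'
  have tangent : b ^ (q - 1) + (q - 1) * b ^ (q - 2) * (x - b) < x ^ (q - 1) := by
    convert rpow_add_mul_sub_lt_rpow_of_neg (sub_neg.2 hq) hb hx hxb using 5
    ring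
  rw [lqObjective_eq_mul_rpow_sub_one hx, lqObjective_eq_mul_rpow_sub_one hb]
  calc
    _ = lam * ((b ^ (q - 1) + (q - 1) * b ^ (q - 2) * (x - b)) * x)
          + (1 / 2) * (x - lqCenter lam q b) ^ 2 := by
      rw [lqCenter, lqSlopeDeriv, hpow]
      ring
    _ < lam * (x ^ (q - 1) * x) + (1 / 2) * (x - lqCenter lam q b) ^ 2 := by gcongr

theorem lqObjective_zero_lt_of_neg (hq : q ≠ 0) (hlam : 0 < lam) (hv : 0 ≤ v) (hx : x < 0) :
    lqObjective lam q v 0 < lqObjective lam q v x := by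
  have hpenalty : 0 < lam * |x| ^ q :=
    mul_pos hlam (Real.rpow_pos_of_pos (abs_pos.2 hx.ne) q)
  have hdist : v ^ 2 ≤ (x - v) ^ 2 := by
    rw [sub_sq_comm]
    gcongr
    linarith
  rw [lqObjective_zero hq, lqObjective]
  linarith

theorem lqObjective_sub_lqObjective_zero (v w : ℝ) :
    lqObjective lam q v x - lqObjective lam q v 0 =
      lqObjective lam q w x - lqObjective lam q w 0 + (w - v) * x := by
  simp only [lqObjective]
  ring

theorem lqObjective_lqThreshold_lqBreakpoint (hq0 : q ≠ 0) (hq1 : q < 1) (hlam : 0 < lam) :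
    lqObjective lam q (lqThreshold lam q) (lqBreakpoint lam q) =
      lqObjective lam q (lqThreshold lam q) 0 := by
  rw [lqThreshold, lqObjective_lqCenter_zero hq0 (lqBreakpoint_pos hq1 hlam),
    lqSlopeDeriv_lqBreakpoint hq1 hlam, zero_mul, add_zero]

theorem lqObjective_lqCenter_lt_of_pos (hq : q < 1) (hlam : 0 < lam)
    (hb : lqBreakpoint lam q ≤ b) (hx : 0 < x) (hxb : x ≠ b) :
    lqObjective lam q (lqCenter lam q b) b < lqObjective lam q (lqCenter lam q b) x :=
  (le_add_of_nonneg_right (mul_nonneg (lqSlopeDeriv_nonneg hq hlam hb) (sq_nonneg _))).trans_lt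
    (lqObjective_lqCenter_add_sq_lt hq hlam ((lqBreakpoint_pos hq hlam).trans_le hb) hx hxb)

theorem lqObjective_lqThreshold_zero_lt (hq0 : 0 < q) (hq1 : q < 1) (hlam : 0 < lam)
    (hx : x ≠ 0) (hxβ : x ≠ lqBreakpoint lam q) :
    lqObjective lam q (lqThreshold lam q) 0 < lqObjective lam q (lqThreshold lam q) x := by
  rcases hx.lt_or_gt with hneg | hpos
  · have hβ := lqBreakpoint_pos hq1 hlam
    exact lqObjective_zero_lt_of_neg hq0.ne' hlam (hβ.trans (self_lt_lqCenter hq0 hlam hβ)).le hneg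
  · rw [← lqObjective_lqThreshold_lqBreakpoint hq0.ne' hq1 hlam]
    exact lqObjective_lqCenter_lt_of_pos hq1 hlam le_rfl hpos hxβ

theorem lqObjective_zero_lt_of_lt_lqThreshold (hq0 : 0 < q) (hq1 : q < 1) (hlam : 0 < lam)
    (hv : 0 ≤ v) (hvτ : v < lqThreshold lam q) (hx : x ≠ 0) :
    lqObjective lam q v 0 < lqObjective lam q v x := by
  rcases hx.lt_or_gt with hneg | hpos
  · exact lqObjective_zero_lt_of_neg hq0.ne' hlam hv hneg
  have hle : lqObjective lam q (lqThreshold lam q) 0 ≤ lqObjective lam q (lqThreshold lam q) x := by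
    rcases eq_or_ne x (lqBreakpoint lam q) with rfl | hxβ
    · exact (lqObjective_lqThreshold_lqBreakpoint hq0.ne' hq1 hlam).ge
    · exact (lqObjective_lqThreshold_zero_lt hq0 hq1 hlam hx hxβ).le
  linarith [lqObjective_sub_lqObjective_zero (lam := lam) (q := q) (x := x) v (lqThreshold lam q),
    mul_pos (sub_pos.2 hvτ) hpos]

theorem lqObjective_lqCenter_lt (hq0 : 0 < q) (hq1 : q < 1) (hlam : 0 < lam)
    (hb : lqBreakpoint lam q < b) (hxb : x ≠ b) :
    lqObjective lam q (lqCenter lam q b) b < lqObjective lam q (lqCenter lam q b) x := by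
  have hb0 : 0 < b := (lqBreakpoint_pos hq1 hlam).trans hb
  have hlt_zero : lqObjective lam q (lqCenter lam q b) b <
      lqObjective lam q (lqCenter lam q b) 0 := by
    rw [lqObjective_lqCenter_zero hq0.ne' hb0]
    exact lt_add_of_pos_right _ (mul_pos (lqSlopeDeriv_pos hq1 hlam hb) (pow_pos hb0 2))
  rcases lt_trichotomy x 0 with hneg | rfl | hpos
  · have hcenter := hb0.trans (self_lt_lqCenter hq0 hlam hb0)
    exact hlt_zero.trans (lqObjective_zero_lt_of_neg hq0.ne' hlam hcenter.le hneg)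
  · exact hlt_zero
  · exact lqObjective_lqCenter_lt_of_pos hq1 hlam hb.le hpos hxb

-- Two stationary points of the same objective would each be strictly better than the other.
theorem injOn_lqCenter (hq : q < 1) (hlam : 0 < lam) :
    InjOn (lqCenter lam q) (Ici (lqBreakpoint lam q)) := by
  intro b hb c hc hbc
  have hβ := lqBreakpoint_pos hq hlam
  by_contra hne
  have hlt := lqObjective_lqCenter_lt_of_pos hq hlam hb (hβ.trans_le hc) (Ne.symm hne)
  rw [hbc] at hlt
  exact hlt.not_gt (lqObjective_lqCenter_lt_of_pos hq hlam hc (hβ.trans_le hb) hne)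

theorem exists_lqCenter_eq (hq0 : 0 < q) (hq1 : q < 1) (hlam : 0 < lam)
    (hv : lqThreshold lam q < v) : ∃ b ∈ Ioo (lqBreakpoint lam q) v, lqCenter lam q b = v := by
  have hβ := lqBreakpoint_pos hq1 hlam
  have hβv : lqBreakpoint lam q < v := (self_lt_lqCenter hq0 hlam hβ).trans hv
  have hcont : ContinuousOn (lqCenter lam q) (Icc (lqBreakpoint lam q) v) :=
    continuousOn_id.add <| continuousOn_const.mul <|
      continuousOn_id.rpow_const fun b hb => Or.inl (hβ.trans_le hb.1).ne'
  exact intermediate_value_Ioo hβv.le hcont ⟨hv, self_lt_lqCenter hq0 hlam (hβ.trans hβv)⟩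

end

/-- Characterization of the proximity operator of the ℓ_q penalty (`0 < q < 1`):
with `β = (2λ(1−q))^{1/(2−q)}` and `τ_q = β + λqβ^{q−1}`, for `v ≥ 0` and
`f(x) = λ|x|^q + (1/2)(x − v)²`, the set of global minimizers of `f` is `{0}` when
`v < τ_q`, `{0, β}` when `v = τ_q`, and `{b}` when `v > τ_q`, where `b` is the unique
real with `b ≥ β` and `b + λq·b^{q−1} = v`, satisfying `β < b < v`. -/
theorem lq_prox_characterization (q lam : ℝ) (hq0 : 0 < q) (hq1 : q < 1) (hlam : 0 < lam)
    (β τq : ℝ)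
    (hβ : β = (2 * lam * (1 - q)) ^ ((1 : ℝ) / (2 - q)))
    (hτ : τq = β + lam * q * β ^ (q - 1))
    (v : ℝ) (hv : 0 ≤ v)
    (f : ℝ → ℝ) (hf : ∀ x : ℝ, f x = lam * |x| ^ q + (1 / 2) * (x - v) ^ 2) :
    (v < τq → {x : ℝ | ∀ y : ℝ, f x ≤ f y} = {0}) ∧
    (v = τq → {x : ℝ | ∀ y : ℝ, f x ≤ f y} = {0, β}) ∧
    (τq < v → ∃ b : ℝ,
      (β ≤ b ∧ b + lam * q * b ^ (q - 1) = v) ∧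
      (∀ b' : ℝ, β ≤ b' → b' + lam * q * b' ^ (q - 1) = v → b' = b) ∧
      β < b ∧ b < v ∧ {x : ℝ | ∀ y : ℝ, f x ≤ f y} = {b}) := by
  obtain rfl : f = lqObjective lam q v := funext hf
  obtain rfl : β = lqBreakpoint lam q := hβ
  obtain rfl : τq = lqThreshold lam q := hτ
  refine ⟨fun hvτ => ?_, ?_, fun hvτ => ?_⟩
  · exact setOf_forall_le_eq_singleton fun x hx =>
      lqObjective_zero_lt_of_lt_lqThreshold hq0 hq1 hlam hv hvτ hx
  · rintro rfl
    refine setOf_forall_le_eq_of_forall_lt (a := 0) ?_ fun x hx => ?_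
    · rintro x (rfl | rfl)
      exacts [rfl, lqObjective_lqThreshold_lqBreakpoint hq0.ne' hq1 hlam]
    · obtain ⟨hx0, hxβ⟩ := not_or.1 hx
      exact lqObjective_lqThreshold_zero_lt hq0 hq1 hlam hx0 hxβ
  · obtain ⟨b, ⟨hβb, hbv⟩, rfl⟩ := exists_lqCenter_eq hq0 hq1 hlam hvτ
    refine ⟨b, ⟨hβb.le, rfl⟩, fun b' hb' hb'v => ?_, hβb, hbv, ?_⟩
    · exact injOn_lqCenter hq1 hlam hb' hβb.le hb'v
    · exact setOf_forall_le_eq_singleton fun x hx =>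
        lqObjective_lqCenter_lt hq0 hq1 hlam hβb hx
end

section
/- Let λ > 0 and θ > 0, define the logarithmic penalty φ(x) = λ·log(1 + |x|/θ), let v ≥ 0 and f(x) = φ(x) + (1/2)(x − v)². If (v + θ)² < 4λ, then 0 is a global minimizer of f over ℝ. If (v + θ)² ≥ 4λ, set x₁ = max(0, ((v − θ) + √((v + θ)² − 4λ))/2); then min(f(0), f(x₁)) ≤ f(x) for all x ∈ ℝ, so whichever of 0, x₁ attains the smaller objective value is a global minimizer of f. -/
/-!
Since `v ≥ 0`, reflecting a negative point to the positive half-line does not increase the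
objective, so only `x ≥ 0` matters. There the derivative is `q x / (x + θ)`, where `q` is a monic
quadratic of discriminant `(v + θ)² - 4λ`. If the discriminant is negative, the objective increases
on the half-line. Otherwise, with `r₁ ≤ r₂` the roots of `q`, it increases up to `r₁`, decreases up
to `r₂` and increases afterwards, so only `0` and `r₂` (if nonnegative) compete for the minimum.
-/

open Set

lemma min_le_of_monotoneOn_antitoneOn_monotoneOn {α β : Type*} [LinearOrder α] [LinearOrder β]
    {F : α → β} {a r₁ r₂ x : α} (hleft : MonotoneOn F (Icc a r₁))
    (hmiddle : AntitoneOn F (Icc (max a r₁) r₂)) (hright : MonotoneOn F (Ici (max a r₂)))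
    (hx : a ≤ x) : min (F a) (F (max a r₂)) ≤ F x := by
  rcases le_total x r₁ with hx₁ | hx₁
  · exact min_le_of_left_le (hleft ⟨le_rfl, hx.trans hx₁⟩ ⟨hx, hx₁⟩ hx)
  apply min_le_of_right_le
  rcases le_total x r₂ with hx₂ | hx₂
  · have hmax : max a r₁ ≤ x := max_le hx hx₁
    rw [max_eq_right (hx.trans hx₂)]
    exact hmiddle ⟨hmax, hx₂⟩ ⟨hmax.trans hx₂, le_rfl⟩ hx₂
  · have hmax : max a r₂ ≤ x := max_le hx hx₂
    exact hright self_mem_Ici hmax hmax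

/-- The objective `x ↦ λ log (1 + |x| / θ) + (x - v)² / 2` whose minimizers form the value at `v` of
the proximity operator of the logarithmic penalty. -/
noncomputable def logProxObjective (lam θ v x : ℝ) : ℝ :=
  lam * Real.log (1 + |x| / θ) + (1 / 2) * (x - v) ^ 2

/-- The left-hand side of the stationarity equation of `logProxObjective` on the positive half-line,
cleared of the denominator `x + θ`. -/
def logProxQuadratic (lam θ v x : ℝ) : ℝ :=
  x ^ 2 + (θ - v) * x + (lam - v * θ)

section LogProx

variable {lam θ v : ℝ}

lemma logProxQuadratic_nonneg (hdisc : (v + θ) ^ 2 ≤ 4 * lam) (x : ℝ) :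
    0 ≤ logProxQuadratic lam θ v x := by
  have hsquare : 4 * logProxQuadratic lam θ v x =
      (2 * x + θ - v) ^ 2 + (4 * lam - (v + θ) ^ 2) := by
    unfold logProxQuadratic
    ring
  linarith [sq_nonneg (2 * x + θ - v)]

lemma logProxQuadratic_eq_mul (hdisc : 4 * lam ≤ (v + θ) ^ 2) (x : ℝ) :
    logProxQuadratic lam θ v x =
      (x - (v - θ - √((v + θ) ^ 2 - 4 * lam)) / 2) *
        (x - (v - θ + √((v + θ) ^ 2 - 4 * lam)) / 2) := by
  have hsqrt := Real.sq_sqrt (sub_nonneg.mpr hdisc)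
  unfold logProxQuadratic
  linear_combination hsqrt / 4

lemma logProxObjective_abs_le (hv : 0 ≤ v) (x : ℝ) :
    logProxObjective lam θ v |x| ≤ logProxObjective lam θ v x := by
  have hdist : (|x| - v) ^ 2 ≤ (x - v) ^ 2 := by
    simpa only [abs_of_nonneg hv] using sq_le_sq.mpr (abs_abs_sub_abs_le x v)
  unfold logProxObjective
  rw [abs_abs]
  gcongr

lemma continuous_logProxObjective (hθ : 0 < θ) : Continuous (logProxObjective lam θ v) := by
  have hne (x : ℝ) : 1 + |x| / θ ≠ 0 := by positivity
  unfold logProxObjective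
  fun_prop (disch := exact hne _)

lemma hasDerivAt_logProxObjective (hθ : 0 < θ) {x : ℝ} (hx : 0 < x) :
    HasDerivAt (logProxObjective lam θ v) (logProxQuadratic lam θ v x / (x + θ)) x := by
  have hpenalty : HasDerivAt (fun y ↦ lam * Real.log (1 + |y| / θ))
      (lam * (1 / θ / (1 + |x| / θ))) x :=
    ((((hasDerivAt_abs_pos hx).div_const θ).const_add 1).log (by positivity)).const_mul lam
  have hfidelity : HasDerivAt (fun y ↦ (1 / 2) * (y - v) ^ 2) (x - v) x := by
    refine ((((hasDerivAt_id x).sub_const v).pow 2).const_mul (1 / 2 : ℝ)).congr_deriv ?_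
    simp only [id]
    ring
  refine (hpenalty.add hfidelity).congr_deriv ?_
  rw [abs_of_pos hx, logProxQuadratic]
  field_simp
  ring

lemma monotoneOn_logProxObjective (hθ : 0 < θ) {s : Set ℝ} (hs : Convex ℝ s) (hs₀ : s ⊆ Ici 0)
    (hq : ∀ x ∈ s, 0 ≤ logProxQuadratic lam θ v x) :
    MonotoneOn (logProxObjective lam θ v) s := by
  have hpos {x : ℝ} (hx : x ∈ interior s) : 0 < x := by
    simpa only [interior_Ici, mem_Ioi] using interior_mono hs₀ hx
  refine monotoneOn_of_hasDerivWithinAt_nonneg hs (continuous_logProxObjective hθ).continuousOn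
    (fun x hx ↦ (hasDerivAt_logProxObjective hθ (hpos hx)).hasDerivWithinAt) fun x hx ↦ ?_
  exact div_nonneg (hq x (interior_subset hx)) (add_pos (hpos hx) hθ).le

lemma antitoneOn_logProxObjective (hθ : 0 < θ) {s : Set ℝ} (hs : Convex ℝ s) (hs₀ : s ⊆ Ici 0)
    (hq : ∀ x ∈ s, logProxQuadratic lam θ v x ≤ 0) :
    AntitoneOn (logProxObjective lam θ v) s := by
  have hpos {x : ℝ} (hx : x ∈ interior s) : 0 < x := by
    simpa only [interior_Ici, mem_Ioi] using interior_mono hs₀ hx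
  refine antitoneOn_of_hasDerivWithinAt_nonpos hs (continuous_logProxObjective hθ).continuousOn
    (fun x hx ↦ (hasDerivAt_logProxObjective hθ (hpos hx)).hasDerivWithinAt) fun x hx ↦ ?_
  exact div_nonpos_of_nonpos_of_nonneg (hq x (interior_subset hx)) (add_pos (hpos hx) hθ).le

lemma min_logProxObjective_le_of_quadratic_eq_mul (hθ : 0 < θ) {r₁ r₂ : ℝ} (hr : r₁ ≤ r₂)
    (hq : ∀ x, logProxQuadratic lam θ v x = (x - r₁) * (x - r₂)) {x : ℝ} (hx : 0 ≤ x) :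
    min (logProxObjective lam θ v 0) (logProxObjective lam θ v (max 0 r₂)) ≤
      logProxObjective lam θ v x := by
  refine min_le_of_monotoneOn_antitoneOn_monotoneOn (r₁ := r₁) ?left ?middle ?right hx
  case left =>
    refine monotoneOn_logProxObjective hθ (convex_Icc _ _) Icc_subset_Ici_self fun y hy ↦ ?_
    rw [hq]
    exact mul_nonneg_of_nonpos_of_nonpos (sub_nonpos.mpr hy.2) (sub_nonpos.mpr (hy.2.trans hr))
  case middle =>
    refine antitoneOn_logProxObjective hθ (convex_Icc _ _)
      (fun y hy ↦ (le_max_left _ _).trans hy.1) fun y hy ↦ ?_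
    rw [hq]
    exact mul_nonpos_of_nonneg_of_nonpos
      (sub_nonneg.mpr ((le_max_right _ _).trans hy.1)) (sub_nonpos.mpr hy.2)
  case right =>
    refine monotoneOn_logProxObjective hθ (convex_Ici _)
      (Ici_subset_Ici.mpr (le_max_left _ _)) fun y hy ↦ ?_
    have hy₂ : r₂ ≤ y := (le_max_right _ _).trans hy
    rw [hq]
    exact mul_nonneg (sub_nonneg.mpr (hr.trans hy₂)) (sub_nonneg.mpr hy₂)

end LogProx

theorem log_prox_characterization_general {lam θ v : ℝ} (hθ : 0 < θ) (hv : 0 ≤ v) :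
    ((v + θ) ^ 2 < 4 * lam →
      ∀ x, logProxObjective lam θ v 0 ≤ logProxObjective lam θ v x) ∧
    (4 * lam ≤ (v + θ) ^ 2 →
      ∀ x, min (logProxObjective lam θ v 0)
        (logProxObjective lam θ v (max 0 ((v - θ + √((v + θ) ^ 2 - 4 * lam)) / 2))) ≤
          logProxObjective lam θ v x) := by
  constructor <;> intro hdisc x <;> refine le_trans ?_ (logProxObjective_abs_le hv x)
  · have hmono : MonotoneOn (logProxObjective lam θ v) (Ici 0) :=
      monotoneOn_logProxObjective hθ (convex_Ici 0) subset_rfl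
        fun y _ ↦ logProxQuadratic_nonneg hdisc.le y
    exact hmono self_mem_Ici (abs_nonneg x) (abs_nonneg x)
  · have hroots : (v - θ - √((v + θ) ^ 2 - 4 * lam)) / 2 ≤
        (v - θ + √((v + θ) ^ 2 - 4 * lam)) / 2 := by
      linarith [Real.sqrt_nonneg ((v + θ) ^ 2 - 4 * lam)]
    exact min_logProxObjective_le_of_quadratic_eq_mul hθ hroots
      (logProxQuadratic_eq_mul hdisc) (abs_nonneg x)

/-- Proximity operator of the logarithmic penalty `φ(x) = λ·log(1 + |x|/θ)`:
for `v ≥ 0` and `f(x) = φ(x) + (1/2)(x − v)²`, if `(v + θ)² < 4λ` then `0` is a global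
minimizer of `f`; otherwise, with `x₁ = max(0, ((v − θ) + √((v + θ)² − 4λ))/2)`,
`min(f(0), f(x₁)) ≤ f(x)` for all `x`. -/
theorem log_prox_characterization (lam θ : ℝ) (hlam : 0 < lam) (hθ : 0 < θ)
    (φ : ℝ → ℝ) (hφ : ∀ x : ℝ, φ x = lam * Real.log (1 + |x| / θ))
    (v : ℝ) (hv : 0 ≤ v)
    (f : ℝ → ℝ) (hf : ∀ x : ℝ, f x = φ x + (1 / 2) * (x - v) ^ 2) :
    ((v + θ) ^ 2 < 4 * lam → ∀ x : ℝ, f 0 ≤ f x) ∧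
    (4 * lam ≤ (v + θ) ^ 2 →
      ∀ x : ℝ,
        min (f 0) (f (max 0 ((v - θ + Real.sqrt ((v + θ) ^ 2 - 4 * lam)) / 2))) ≤ f x) := by
  obtain rfl : f = logProxObjective lam θ v := funext fun x ↦ by rw [hf, hφ, logProxObjective]
  exact log_prox_characterization_general hθ hv
end

section
/- Let ψ : ℝ → ℝ be symmetric (ψ(−x) = ψ(x) for all x) and nondecreasing on [0, ∞), let μ > 0 and v ∈ ℝ, and let p be a global minimizer over ℝ of f(x) = μψ(x) + (1/2)(x − v)². Then p·v ≥ 0 and |p| ≤ |v|. -/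
/-!
Among all points whose penalty is at most that of `p`, the point `p` is nearest to `v`. Since `-p`
has the same penalty as `p`, this gives `‖p - v‖ ≤ ‖p + v‖`, which by polarization says that
`⟪p, v⟫ ≥ 0`. If `‖v‖ < ‖p‖`, then `v` itself would be such a competitor, which forces
`‖p - v‖ = 0`.
-/

/-- `IsProx φ v p` says that `p` is a value at `v` of the proximity operator of the penalty `φ`.
It is a relation because a nonconvex penalty may have several minimizers, or none; a positive
parameter `μ` of the operator is absorbed into `φ`. -/
def IsProx {E : Type*} [SeminormedAddCommGroup E] (φ : E → ℝ) (v p : E) : Prop :=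
  ∀ x : E, φ p + (1 / 2) * ‖p - v‖ ^ 2 ≤ φ x + (1 / 2) * ‖x - v‖ ^ 2

namespace IsProx

section Seminormed

variable {E : Type*} [SeminormedAddCommGroup E] {φ : E → ℝ} {v p x : E}

theorem norm_sub_le_of_le (hp : IsProx φ v p) (hx : φ x ≤ φ p) : ‖p - v‖ ≤ ‖x - v‖ := by
  have hsq : ‖p - v‖ ^ 2 ≤ ‖x - v‖ ^ 2 := by linarith [hp x]
  exact le_of_sq_le_sq hsq (norm_nonneg _)

theorem norm_le (hp : IsProx φ v p) (hφ : ‖v‖ ≤ ‖p‖ → φ v ≤ φ p) : ‖p‖ ≤ ‖v‖ := by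
  rcases le_total ‖p‖ ‖v‖ with hpv | hvp
  · exact hpv
  · have hdist : ‖p - v‖ ≤ 0 := by simpa using hp.norm_sub_le_of_le (hφ hvp)
    linarith [norm_sub_norm_le p v]

end Seminormed

theorem inner_nonneg {E : Type*} [SeminormedAddCommGroup E] [InnerProductSpace ℝ E]
    {φ : E → ℝ} {v p : E} (hp : IsProx φ v p) (hφ : φ (-p) ≤ φ p) : 0 ≤ inner ℝ p v := by
  have hdist : ‖p - v‖ ≤ ‖p + v‖ := by
    calc ‖p - v‖ ≤ ‖-p - v‖ := hp.norm_sub_le_of_le hφ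
      _ = ‖p + v‖ := by rw [← neg_add', norm_neg]
  have hsq : ‖p - v‖ ^ 2 ≤ ‖p + v‖ ^ 2 := by gcongr
  rw [norm_sub_sq_real, norm_add_sq_real] at hsq
  linarith

end IsProx

theorem isProx_real_iff {φ : ℝ → ℝ} {v p : ℝ} :
    IsProx φ v p ↔ ∀ x : ℝ, φ p + (1 / 2) * (p - v) ^ 2 ≤ φ x + (1 / 2) * (x - v) ^ 2 := by
  simp only [IsProx, Real.norm_eq_abs, sq_abs]

theorem apply_abs_of_even {α β : Type*} [AddGroup α] [LinearOrder α] {ψ : α → β}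
    (heven : Function.Even ψ) (x : α) : ψ |x| = ψ x := by
  rcases abs_choice x with hx | hx
  · rw [hx]
  · rw [hx, heven]

theorem apply_le_apply_of_even_of_monotoneOn_of_abs_le {α β : Type*} [AddCommGroup α]
    [LinearOrder α] [IsOrderedAddMonoid α] [Preorder β] {ψ : α → β} (heven : Function.Even ψ)
    (hmono : MonotoneOn ψ (Set.Ici 0)) {x y : α} (hxy : |x| ≤ |y|) : ψ x ≤ ψ y :=
  calc ψ x = ψ |x| := (apply_abs_of_even heven x).symm
    _ ≤ ψ |y| := hmono (abs_nonneg x) (abs_nonneg y) hxy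
    _ = ψ y := apply_abs_of_even heven y

theorem prox_sign_shrink_general {E : Type*} [SeminormedAddCommGroup E] [InnerProductSpace ℝ E]
    {φ : E → ℝ} (hφ : ∀ x y : E, ‖x‖ ≤ ‖y‖ → φ x ≤ φ y) {v p : E} (hp : IsProx φ v p) :
    0 ≤ inner ℝ p v ∧ ‖p‖ ≤ ‖v‖ :=
  ⟨hp.inner_nonneg (hφ (-p) p (norm_neg p).le), hp.norm_le (hφ v p)⟩

/-- Sign preservation and shrinkage of the proximity operator: if `ψ` is symmetric and
nondecreasing on `[0, ∞)`, `μ > 0`, and `p` is a global minimizer of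
`x ↦ μψ(x) + (1/2)(x − v)²`, then `p·v ≥ 0` and `|p| ≤ |v|`. -/
theorem prox_sign_shrink (ψ : ℝ → ℝ) (hsymm : ∀ x : ℝ, ψ (-x) = ψ x)
    (hmono : MonotoneOn ψ (Set.Ici 0)) (μ : ℝ) (hμ : 0 < μ) (v p : ℝ)
    (hp : ∀ x : ℝ, μ * ψ p + (1 / 2) * (p - v) ^ 2 ≤ μ * ψ x + (1 / 2) * (x - v) ^ 2) :
    0 ≤ p * v ∧ |p| ≤ |v| := by
  have hφ (x y : ℝ) (hxy : ‖x‖ ≤ ‖y‖) : μ * ψ x ≤ μ * ψ y :=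
    mul_le_mul_of_nonneg_left
      (apply_le_apply_of_even_of_monotoneOn_of_abs_le hsymm hmono hxy) hμ.le
  simpa only [Real.inner_apply, Real.norm_eq_abs] using
    prox_sign_shrink_general hφ (isProx_real_iff.mpr hp)
end
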